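/- Let r > 0, ρ > 0, κ ≠ 0, R > 0 with R ≠ 1, and 0 < b < 1 be real numbers, with γ_M = (1/R)·(ρ − (1−R)·(r + κ²/(2R))) ≠ 0. Let −α and β, with α > 0 and β > 1, be the two roots of Q(t) = (κ²/2)·t·(t−1) + (ρ−r)·t − ρ, and assume R(α+1) − 1 ≠ 0. Define C = ((b^{1+R(β−1)} − 1)/(β(α+β)))·((R(α+1)−1)/(R·γ_M) − (α+1)/r). Suppose z_a ∈ (0,1) satisfies 0 = (α+β)·(R(β−1)+1)·C·z_a^{β} − (α+1)·z_a/r + α/ρ, and define A = (z_a^{(1/R)−1}/γ_M)·(1/(1−R) − z_a) and B = (z_a^{α}/((α+β)·(R(α+1)−1)))·(β/ρ + (1−β)·z_a/r). Then the functions J₁(z) = A·z^{1−1/R} and J₂(z) = B·z^{−α} + C·z^{β} − z/r + 1/((1−R)·ρ) satisfy J₁(z_a) = J₂(z_a), J₁'(z_a) = J₂'(z_a), and J₁''(z_a) = J₂''(z_a). -/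

import Mathlib

/-!
Everything reduces to algebra at `z = z_a`. Write `M = B z^{-α}`, `P = C z^β`, `N = A z^{1-1/R}`.
Up to the factors `z` and `z²`, the first two derivatives of the power functions just multiply
`M`, `P`, `N` by polynomials in the exponents, while `hA`, `hB` and the free boundary equation
`hzaeq` express `N`, `M`, `P` as affine functions of `z`.

Since `-α` and `β` are the roots of `Q`, `Q(t)` equals `(κ²/2)(t+α)(t-β)`, and reading off
`Q(0)`, `Q(1)` and `Q(1-1/R)` gives (`vieta_parameters`)
`ρ = (κ²/2)αβ`, `r = (κ²/2)(α+1)(β-1)`, `R² γ_M = (κ²/2)(R(α+1)-1)(R(β-1)+1)`.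
With these substitutions, value, slope and curvature matching (`matching_algebra`) are identities
of rational functions.
-/

/-- Factoring `Q` through its roots and evaluating at `0`, `1` and `1 - 1/R`. -/
lemma vieta_parameters {r ρ κ R γM α β : ℝ} (hR : 0 < R) (hα : 0 < α) (hβ : 1 < β)
    (hγ : γM = 1 / R * (ρ - (1 - R) * (r + κ ^ 2 / (2 * R))))
    (hQα : κ ^ 2 / 2 * (-α) * (-α - 1) + (ρ - r) * (-α) - ρ = 0)
    (hQβ : κ ^ 2 / 2 * β * (β - 1) + (ρ - r) * β - ρ = 0) :
    ρ = κ ^ 2 / 2 * (α * β) ∧ r = κ ^ 2 / 2 * ((α + 1) * (β - 1)) ∧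
      γM = κ ^ 2 / 2 * ((R * (α + 1) - 1) * (R * (β - 1) + 1)) / R ^ 2 := by
  have hsum : α + β ≠ 0 := by positivity
  have hdiff : ρ - r = κ ^ 2 / 2 * (α - β + 1) := by
    apply mul_left_cancel₀ hsum
    linear_combination hQβ - hQα
  have h1 : ρ = κ ^ 2 / 2 * (α * β) := by linear_combination β * hdiff - hQβ
  have h2 : r = κ ^ 2 / 2 * ((α + 1) * (β - 1)) := by linear_combination h1 - hdiff
  refine ⟨h1, h2, ?_⟩
  rw [hγ, h1, h2]
  field_simp
  ring

/-- The rational identities behind value, slope and curvature matching, with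
`k = κ²/2`, `M = B z^{-α}` and `P = C z^β`; the left-hand sides are `J₁`, `z J₁'`, `z² J₁''`
for `J₁(z) = A z^{1-1/R}`. -/
lemma matching_algebra {k R α β z M P r ρ γ : ℝ} (hk : k ≠ 0) (hR : R ≠ 0) (hR1 : 1 - R ≠ 0)
    (hα : α ≠ 0) (hβ : β ≠ 0) (hα1 : α + 1 ≠ 0) (hβ1 : β - 1 ≠ 0) (hs : α + β ≠ 0)
    (hX : R * (α + 1) - 1 ≠ 0) (hY : R * (β - 1) + 1 ≠ 0)
    (hρ : ρ = k * (α * β)) (hr : r = k * ((α + 1) * (β - 1)))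
    (hγ : γ = k * ((R * (α + 1) - 1) * (R * (β - 1) + 1)) / R ^ 2)
    (hM : M = (β / ρ + (1 - β) * z / r) / ((α + β) * (R * (α + 1) - 1)))
    (hP : P = ((α + 1) * z / r - α / ρ) / ((α + β) * (R * (β - 1) + 1))) :
    (1 / (1 - R) - z) / γ = M + P - z / r + 1 / ((1 - R) * ρ) ∧
    (1 - 1 / R) * ((1 / (1 - R) - z) / γ) = -α * M + β * P - z / r ∧
    (1 - 1 / R) * (-1 / R) * ((1 / (1 - R) - z) / γ) =
      -α * (-α - 1) * M + β * (β - 1) * P := by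
  -- Cancelling the common factors of `r` and `ρ` first keeps the denominators small.
  have hM' : M = (1 / α - z / (α + 1)) / (k * ((α + β) * (R * (α + 1) - 1))) := by
    rw [hM, hρ, hr]; field_simp; ring
  have hP' : P = (z / (β - 1) - 1 / β) / (k * ((α + β) * (R * (β - 1) + 1))) := by
    rw [hP, hρ, hr]; field_simp
  rw [hM', hP', hγ, hρ, hr]
  refine ⟨?_, ?_, ?_⟩ <;> (field_simp; ring)

lemma hasDerivAt_const_mul_rpow (c p : ℝ) {x : ℝ} (hx : 0 < x) :
    HasDerivAt (fun z : ℝ => c * z ^ p) (c * p * x ^ (p - 1)) x := by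
  simpa [mul_assoc] using (Real.hasDerivAt_rpow_const (p := p) (Or.inl hx.ne')).const_mul c

/-- If `f'` is given by `g` on the open half line, then `f''` is given by `g'` there. -/
lemma deriv_deriv_of_hasDerivAt_pos {f g : ℝ → ℝ} {x d : ℝ} (hx : 0 < x)
    (hf : ∀ y, 0 < y → HasDerivAt f (g y) y) (hg : HasDerivAt g d x) :
    deriv (deriv f) x = d := by
  have h : deriv f =ᶠ[nhds x] g := by
    filter_upwards [lt_mem_nhds hx] with y hy using (hf y hy).deriv
  rw [h.deriv_eq, hg.deriv]


/-- Smooth pasting (C²-matching) at the free boundary `z_a` between the first region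
`J₁(z) = A·z^{1−1/R}` and the second region `J₂(z) = B·z^{−α} + C·z^{β} − z/r + U(1)/ρ`
of the dual value function. -/
theorem smooth_pasting_at_za (r ρ κ R b γM α β C z_a A B : ℝ)
    (hr : 0 < r) (hρ : 0 < ρ) (hκ : κ ≠ 0) (hR : 0 < R) (hR1 : R ≠ 1)
    (hb0 : 0 < b) (hb1 : b < 1)
    (hγ : γM = 1 / R * (ρ - (1 - R) * (r + κ ^ 2 / (2 * R)))) (hγ0 : γM ≠ 0)
    (hα : 0 < α) (hβ : 1 < β)
    (hQα : κ ^ 2 / 2 * (-α) * (-α - 1) + (ρ - r) * (-α) - ρ = 0)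
    (hQβ : κ ^ 2 / 2 * β * (β - 1) + (ρ - r) * β - ρ = 0)
    (hRα : R * (α + 1) - 1 ≠ 0)
    (hC : C = (b ^ (1 + R * (β - 1)) - 1) / (β * (α + β)) *
      ((R * (α + 1) - 1) / (R * γM) - (α + 1) / r))
    (hza : z_a ∈ Set.Ioo (0 : ℝ) 1)
    (hzaeq : 0 = (α + β) * (R * (β - 1) + 1) * C * z_a ^ β - (α + 1) * z_a / r + α / ρ)
    (hA : A = z_a ^ (1 / R - 1) / γM * (1 / (1 - R) - z_a))
    (hB : B = z_a ^ α / ((α + β) * (R * (α + 1) - 1)) * (β / ρ + (1 - β) * z_a / r)) :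
    (fun z : ℝ => A * z ^ (1 - 1 / R)) z_a =
      (fun z : ℝ => B * z ^ (-α) + C * z ^ β - z / r + 1 / ((1 - R) * ρ)) z_a ∧
    deriv (fun z : ℝ => A * z ^ (1 - 1 / R)) z_a =
      deriv (fun z : ℝ => B * z ^ (-α) + C * z ^ β - z / r + 1 / ((1 - R) * ρ)) z_a ∧
    deriv (deriv (fun z : ℝ => A * z ^ (1 - 1 / R))) z_a =
      deriv (deriv (fun z : ℝ => B * z ^ (-α) + C * z ^ β - z / r + 1 / ((1 - R) * ρ))) z_a := by
  obtain ⟨hz, -⟩ := hza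
  obtain ⟨hρ', hr', hγ'⟩ := vieta_parameters hR hα hβ hγ hQα hQβ
  have hβ1 : 0 < β - 1 := by linarith
  have hβ0 : 0 < β := by linarith
  have hY : R * (β - 1) + 1 ≠ 0 := by positivity
  have hs : α + β ≠ 0 := by positivity
  have hN : A * z_a ^ (1 - 1 / R) = (1 / (1 - R) - z_a) / γM := by
    have h : z_a ^ (1 / R - 1) * z_a ^ (1 - 1 / R) = 1 := by
      rw [← Real.rpow_add hz]; simp
    rw [hA]; linear_combination (1 / (1 - R) - z_a) / γM * h
  have hM : B * z_a ^ (-α) =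
      (β / ρ + (1 - β) * z_a / r) / ((α + β) * (R * (α + 1) - 1)) := by
    have h : z_a ^ α * z_a ^ (-α) = 1 := by
      rw [← Real.rpow_add hz]; simp
    rw [hB]
    linear_combination (β / ρ + (1 - β) * z_a / r) / ((α + β) * (R * (α + 1) - 1)) * h
  have hP : C * z_a ^ β = ((α + 1) * z_a / r - α / ρ) / ((α + β) * (R * (β - 1) + 1)) := by
    rw [eq_div_iff (mul_ne_zero hs hY)]
    linear_combination -hzaeq
  obtain ⟨e0, e1, e2⟩ := matching_algebra (by positivity) hR.ne' (sub_ne_zero.mpr hR1.symm)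
    hα.ne' hβ0.ne' (by positivity) hβ1.ne' hs hRα hY hρ' hr' hγ' hM hP
  rw [← hN] at e0 e1 e2
  -- First derivatives on the half line, for both regions.
  have d1 : ∀ y : ℝ, 0 < y → HasDerivAt (fun z : ℝ => A * z ^ (1 - 1 / R))
      (A * (1 - 1 / R) * y ^ (1 - 1 / R - 1)) y :=
    fun y hy => hasDerivAt_const_mul_rpow _ _ hy
  have d2 : ∀ y : ℝ, 0 < y →
      HasDerivAt (fun z : ℝ => B * z ^ (-α) + C * z ^ β - z / r + 1 / ((1 - R) * ρ))
        (B * (-α) * y ^ (-α - 1) + C * β * y ^ (β - 1) - 1 / r) y :=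
    fun y hy => (((hasDerivAt_const_mul_rpow B (-α) hy).add
      (hasDerivAt_const_mul_rpow C β hy)).sub ((hasDerivAt_id y).div_const r)).add_const _
  have dd1 := hasDerivAt_const_mul_rpow (A * (1 - 1 / R)) (1 - 1 / R - 1) hz
  have dd2 := ((hasDerivAt_const_mul_rpow (B * (-α)) (-α - 1) hz).add
      (hasDerivAt_const_mul_rpow (C * β) (β - 1) hz)).sub_const (1 / r)
  have hpow (p : ℝ) : z_a ^ (p - 1) = z_a ^ p / z_a := Real.rpow_sub_one hz.ne' p
  refine ⟨e0, ?_, ?_⟩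
  · rw [(d1 z_a hz).deriv, (d2 z_a hz).deriv, hpow, hpow, hpow]
    have hzr : z_a / r / z_a = 1 / r := by field_simp
    linear_combination e1 / z_a - hzr
  · rw [deriv_deriv_of_hasDerivAt_pos hz d1 dd1, deriv_deriv_of_hasDerivAt_pos hz d2 dd2]
    simp only [hpow]
    linear_combination e2 / z_a / z_a
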